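/- Let G be a subgroup of U(2^N) with U_{N,G} = {e^{iθ} I : θ ∈ ℝ} (only scalar unitaries are G-symmetric). If and only if this holds is the G-symmetric Clifford group C_{N,G} a G-symmetric unitary 4-design. In particular, if C_{N,G} is a G-symmetric unitary 4-design, then every unitary commuting with all of G is a scalar multiple of the identity. -/

import Mathlib

open Matrix MeasureTheory

/-- Basis index for `N` qubits. -/
abbrev QubitIdx (N : ℕ) := Fin N → Fin 2

/-- Linear operators on the Hilbert space `(ℂ²)^⊗N`, as matrices. -/
abbrev Op (N : ℕ) := Matrix (QubitIdx N) (QubitIdx N) ℂ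

/-- The single-qubit Pauli matrices I, X, Y, Z. -/
noncomputable def σ1 : Fin 4 → Matrix (Fin 2) (Fin 2) ℂ
  | 0 => 1
  | 1 => !![0, 1; 1, 0]
  | 2 => !![0, -Complex.I; Complex.I, 0]
  | 3 => !![1, 0; 0, -1]

/-- The unsigned Pauli operator on `N` qubits indexed by `a : Fin N → Fin 4`
(the Kronecker product of the single-qubit Paulis `σ1 (a k)`). -/
noncomputable def pauli {N : ℕ} (a : Fin N → Fin 4) : Op N :=
  Matrix.of fun i j => ∏ k, σ1 (a k) (i k) (j k)

/-- The phase factors `{±1, ±i}`. -/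
def phases : Set ℂ := {1, -1, Complex.I, -Complex.I}

/-- The Pauli group on `N` qubits: phased unsigned Paulis. -/
def PauliGroup (N : ℕ) : Set (Op N) :=
  {P | ∃ c ∈ phases, ∃ a : Fin N → Fin 4, P = c • pauli a}

/-- A Clifford operator: a unitary whose conjugation action preserves the Pauli group. -/
def IsClifford {N : ℕ} (U : Op N) : Prop :=
  U ∈ Matrix.unitaryGroup (QubitIdx N) ℂ ∧
    ∀ P ∈ PauliGroup N, U * P * Uᴴ ∈ PauliGroup N

/-- The `G`-symmetric unitary group `U_{N,G}`: unitaries commuting with every element of `G`. -/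
def UnitarySym (N : ℕ) (G : Set (Op N)) : Set (Op N) :=
  {U | U ∈ Matrix.unitaryGroup (QubitIdx N) ℂ ∧ ∀ g ∈ G, U * g = g * U}

/-- The `G`-symmetric Clifford group `C_{N,G}`. -/
def CliffordSym (N : ℕ) (G : Set (Op N)) : Set (Op N) :=
  {U | IsClifford U ∧ U ∈ UnitarySym N G}

/-- `G` is a subgroup of the unitary group on `N` qubits. -/
def IsUnitarySubgroup {N : ℕ} (G : Set (Op N)) : Prop :=
  (∀ g ∈ G, g ∈ Matrix.unitaryGroup (QubitIdx N) ℂ) ∧ (1 : Op N) ∈ G ∧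
    (∀ g ∈ G, ∀ h ∈ G, g * h ∈ G) ∧ (∀ g ∈ G, gᴴ ∈ G)

/-- Operators on the `t`-fold tensor power `H^⊗t` of the `N`-qubit Hilbert space. -/
abbrev BigOp (N t : ℕ) := Matrix (Fin t → QubitIdx N) (Fin t → QubitIdx N) ℂ

/-- The `t`-fold tensor (Kronecker) power `A^⊗t` of an operator `A`. -/
noncomputable def tpow {N : ℕ} (t : ℕ) (A : Op N) : BigOp N t :=
  Matrix.of fun i j => ∏ s, A (i s) (j s)

noncomputable instance OpMeasurableSpace {N : ℕ} : MeasurableSpace (Op N) := borel (Op N)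

/-- The `t`-fold twirling channel `Φ_{t,μ}(L) = ∫ U^⊗t L (U^⊗t)† dμ(U)`, defined entrywise. -/
noncomputable def twirl {N : ℕ} (t : ℕ) (μ : Measure (Op N)) (L : BigOp N t) : BigOp N t :=
  Matrix.of fun i j => ∫ U, (tpow t U * L * (tpow t U)ᴴ) i j ∂μ

/-- The Kronecker power `A^⊗N` of a single-qubit operator, as an operator on `N` qubits. -/
noncomputable def kronPow {N : ℕ} (A : Matrix (Fin 2) (Fin 2) ℂ) : Op N :=
  Matrix.of fun i j => ∏ k, A (i k) (j k)

/-- The single-qubit unitary `e^{iθZ}`. -/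
noncomputable def expZ (θ : ℝ) : Matrix (Fin 2) (Fin 2) ℂ :=
  !![Complex.exp ((θ : ℂ) * Complex.I), 0; 0, Complex.exp (-(θ : ℂ) * Complex.I)]

/-- The permutation operator `V_σ` on the threefold tensor power `H^⊗3`. -/
noncomputable def permOp {N : ℕ} (σ : Equiv.Perm (Fin 3)) : BigOp N 3 :=
  Matrix.of fun i j => if i = j ∘ ⇑σ⁻¹ then 1 else 0

/-- The tensor product `G₁ ⊗ G₂ ⊗ G₃` as an operator on `H^⊗3`. -/
noncomputable def tprod3 {N : ℕ} (G₁ G₂ G₃ : Op N) : BigOp N 3 :=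
  Matrix.of fun i j => G₁ (i 0) (j 0) * G₂ (i 1) (j 1) * G₃ (i 2) (j 2)

/-- The Kronecker product of a family of square matrices of the same size. -/
noncomputable def piKron {ι n : Type*} [Fintype ι] (A : ι → Matrix n n ℂ) :
    Matrix (ι → n) (ι → n) ℂ :=
  Matrix.of fun i j => ∏ k, A k (i k) (j k)

lemma piKron_mul {ι n : Type*} [Fintype ι] [DecidableEq ι] [Fintype n]
    (A B : ι → Matrix n n ℂ) :
    piKron A * piKron B = piKron fun k => A k * B k := by
  ext i j
  simp only [piKron, Matrix.mul_apply, Matrix.of_apply, ← Finset.prod_mul_distrib]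
  exact (Fintype.prod_sum fun k x => A k (i k) x * B k x (j k)).symm

lemma conjTranspose_piKron {ι n : Type*} [Fintype ι] (A : ι → Matrix n n ℂ) :
    (piKron A)ᴴ = piKron fun k => (A k)ᴴ := by
  ext i j
  simp [piKron, Matrix.conjTranspose_apply]

lemma trace_piKron {ι n : Type*} [Fintype ι] [DecidableEq ι] [Fintype n]
    (A : ι → Matrix n n ℂ) : (piKron A).trace = ∏ k, (A k).trace := by
  simp only [piKron, Matrix.trace, Matrix.diag_apply, Matrix.of_apply]
  exact (Fintype.prod_sum fun k x => A k x x).symm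

lemma piKron_one {ι n : Type*} [Fintype ι] [DecidableEq ι] [DecidableEq n] :
    piKron (fun _ : ι => (1 : Matrix n n ℂ)) = 1 := by
  ext i j
  simp only [piKron, Matrix.of_apply, Matrix.one_apply, funext_iff, Finset.prod_ite_zero]
  simp

lemma σ1_mul_self (a : Fin 4) : σ1 a * σ1 a = 1 := by
  fin_cases a <;> ext i j <;> fin_cases i <;> fin_cases j <;>
    simp [σ1, Matrix.mul_apply, Fin.sum_univ_two]

lemma conjTranspose_σ1 (a : Fin 4) : (σ1 a)ᴴ = σ1 a := by
  fin_cases a <;> ext i j <;> fin_cases i <;> fin_cases j <;>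
    simp [σ1, Matrix.conjTranspose_apply]

lemma trace_σ1_mul (a b : Fin 4) :
    (σ1 a * σ1 b).trace = if a = b then 2 else 0 := by
  fin_cases a <;> fin_cases b <;>
    simp [σ1, Matrix.trace, Fin.sum_univ_two] <;> norm_num

lemma sum_σ1_mul_σ1 (i j k l : Fin 2) :
    ∑ a, σ1 a i j * σ1 a k l = if i = l ∧ j = k then 2 else 0 := by
  fin_cases i <;> fin_cases j <;> fin_cases k <;> fin_cases l <;>
    simp [σ1, Fin.sum_univ_four] <;> norm_num

section Pauli

variable {N : ℕ}

lemma pauli_eq_piKron (a : Fin N → Fin 4) : pauli a = piKron fun k => σ1 (a k) := rfl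

lemma pauli_mul_self (a : Fin N → Fin 4) : pauli a * pauli a = 1 := by
  simp [pauli_eq_piKron, piKron_mul, σ1_mul_self, piKron_one]

lemma conjTranspose_pauli (a : Fin N → Fin 4) : (pauli a)ᴴ = pauli a := by
  simp [pauli_eq_piKron, conjTranspose_piKron, conjTranspose_σ1]

lemma trace_pauli_mul (a b : Fin N → Fin 4) :
    (pauli a * pauli b).trace = if a = b then 2 ^ N else 0 := by
  simp only [pauli_eq_piKron, piKron_mul, trace_piKron, trace_σ1_mul, funext_iff,
    Finset.prod_ite_zero]
  simp

lemma sum_pauli_mul_pauli (i j k l : QubitIdx N) :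
    ∑ a, pauli a i j * pauli a k l = if i = l ∧ j = k then 2 ^ N else 0 := by
  simp only [pauli, Matrix.of_apply, ← Finset.prod_mul_distrib]
  rw [← Fintype.prod_sum fun m b => σ1 b (i m) (j m) * σ1 b (k m) (l m)]
  simp only [sum_σ1_mul_σ1, funext_iff, ← forall_and, Finset.prod_ite_zero]
  simp

/-- Parseval's identity for the Pauli basis, in bilinear form. -/
lemma sum_trace_mul_pauli_sq (A : Op N) :
    ∑ a, (A * pauli a).trace ^ 2 = 2 ^ N * (A * A).trace := by
  have expand (a : Fin N → Fin 4) : (A * pauli a).trace ^ 2 =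
      ∑ i, ∑ j, ∑ k, ∑ l, A i j * A k l * (pauli a j i * pauli a l k) := by
    simp only [sq, Matrix.trace, Matrix.diag_apply, Matrix.mul_apply, Finset.sum_mul,
      Finset.mul_sum]
    refine Finset.sum_congr rfl fun i _ => Finset.sum_congr rfl fun j _ =>
      Finset.sum_congr rfl fun k _ => Finset.sum_congr rfl fun l _ => by ring
  simp only [expand]
  rw [Finset.sum_comm]
  simp only [Matrix.trace, Matrix.diag_apply, Matrix.mul_apply, Finset.mul_sum]
  refine Finset.sum_congr rfl fun i _ => ?_
  rw [Finset.sum_comm]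
  refine Finset.sum_congr rfl fun j _ => ?_
  rw [Finset.sum_comm, Finset.sum_eq_single j]
  · rw [Finset.sum_comm, Finset.sum_eq_single i]
    · rw [← Finset.mul_sum, sum_pauli_mul_pauli]
      simp [mul_comm]
    · intro l _ hl
      rw [← Finset.mul_sum, sum_pauli_mul_pauli]
      simp [hl.symm]
    · simp
  · intro k _ hk
    rw [Finset.sum_comm]
    refine Finset.sum_eq_zero fun l _ => ?_
    rw [← Finset.mul_sum, sum_pauli_mul_pauli]
    simp [hk.symm]
  · simp

lemma sum_pauli_conj (A : Op N) :
    ∑ a, pauli a * A * pauli a = ((2 : ℂ) ^ N * A.trace) • (1 : Op N) := by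
  ext i l
  simp only [Matrix.sum_apply, Matrix.mul_apply, Finset.sum_mul, Matrix.smul_apply,
    Matrix.one_apply, smul_eq_mul, Matrix.trace, Matrix.diag_apply]
  rw [Finset.sum_comm]
  have hcomm (k j : QubitIdx N) : ∑ a, pauli a i j * A j k * pauli a k l =
      if i = l ∧ j = k then 2 ^ N * A j k else 0 := by
    rw [← ite_zero_mul, ← sum_pauli_mul_pauli, Finset.sum_mul]
    exact Finset.sum_congr rfl fun a _ => by ring
  have hswap (k : QubitIdx N) : ∑ a, ∑ j, pauli a i j * A j k * pauli a k l =
      ∑ j, if i = l ∧ j = k then 2 ^ N * A j k else 0 := by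
    rw [Finset.sum_comm]
    exact Finset.sum_congr rfl fun j _ => hcomm k j
  simp only [hswap]
  by_cases hil : i = l <;> simp [hil, Finset.mul_sum]

/-- An operator commuting with every Pauli operator is a scalar. -/
lemma exists_eq_smul_one_of_commute_pauli (A : Op N)
    (hA : ∀ a, A * pauli a = pauli a * A) : ∃ c : ℂ, A = c • (1 : Op N) := by
  have hsum := sum_pauli_conj A
  have hterm (a : Fin N → Fin 4) : pauli a * A * pauli a = A := by
    rw [← hA, mul_assoc, pauli_mul_self, mul_one]
  simp only [hterm, Finset.sum_const, ← Nat.cast_smul_eq_nsmul ℂ] at hsum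
  have hcard : ((Finset.univ : Finset (Fin N → Fin 4)).card : ℂ) ≠ 0 := by simp
  refine ⟨((Finset.univ : Finset (Fin N → Fin 4)).card : ℂ)⁻¹ * (2 ^ N * A.trace), ?_⟩
  rw [mul_smul, ← hsum, smul_smul, inv_mul_cancel₀ hcard, one_smul]

end Pauli

section TensorPower

variable {N : ℕ}

lemma tpow_eq_piKron (t : ℕ) (A : Op N) : tpow t A = piKron fun _ => A := rfl

lemma tpow_mul (t : ℕ) (A B : Op N) : tpow t (A * B) = tpow t A * tpow t B := by
  simp [tpow_eq_piKron, piKron_mul]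

lemma conjTranspose_tpow (t : ℕ) (A : Op N) : (tpow t A)ᴴ = tpow t Aᴴ := by
  simp [tpow_eq_piKron, conjTranspose_piKron]

lemma trace_tpow (t : ℕ) (A : Op N) : (tpow t A).trace = A.trace ^ t := by
  simp [tpow_eq_piKron, trace_piKron]

lemma tpow_smul (t : ℕ) (c : ℂ) (A : Op N) : tpow t (c • A) = c ^ t • tpow t A := by
  ext i j
  simp [tpow, Finset.prod_mul_distrib]

lemma tpow_one (t : ℕ) : tpow t (1 : Op N) = 1 := by
  simp [tpow_eq_piKron, piKron_one]

end TensorPower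

section PauliFourthPower

variable {N : ℕ}

/-- The operator `∑_P P^⊗4`, summed over the unsigned Pauli operators. -/
noncomputable def pauliFourthPower (N : ℕ) : BigOp N 4 :=
  ∑ a : Fin N → Fin 4, tpow 4 (pauli a)

lemma tpow_conj_pauliFourthPower (U : Op N) :
    tpow 4 U * pauliFourthPower N * (tpow 4 U)ᴴ = ∑ a, tpow 4 (U * pauli a * Uᴴ) := by
  simp only [pauliFourthPower, Finset.mul_sum, Finset.sum_mul, tpow_mul, conjTranspose_tpow]

lemma pow_four_of_mem_phases {c : ℂ} (hc : c ∈ phases) : c ^ 4 = 1 := by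
  rcases hc with rfl | rfl | rfl | rfl <;> norm_num [neg_pow, Complex.I_pow_four]

/-- Clifford conjugation permutes the unsigned Pauli operators up to phases, whose fourth powers
are trivial. -/
lemma IsClifford.tpow_conj_pauliFourthPower {U : Op N} (hU : IsClifford U) :
    tpow 4 U * pauliFourthPower N * (tpow 4 U)ᴴ = pauliFourthPower N := by
  obtain ⟨hunit, hconj⟩ := hU
  have hUU : Uᴴ * U = 1 := Matrix.mem_unitaryGroup_iff'.1 hunit
  have himage (a : Fin N → Fin 4) : ∃ c ∈ phases, ∃ b, U * pauli a * Uᴴ = c • pauli b :=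
    hconj _ ⟨1, by simp [phases], a, by simp⟩
  choose c hc h hh using himage
  have hinj : Function.Injective h := by
    intro a b hab
    by_contra hne
    have htrace : (U * pauli a * Uᴴ * (U * pauli b * Uᴴ)).trace = 0 := by
      have hprod : U * pauli a * Uᴴ * (U * pauli b * Uᴴ) = U * (pauli a * pauli b * Uᴴ) := by
        simp only [mul_assoc]
        rw [← mul_assoc Uᴴ U, hUU, one_mul]
      rw [hprod, Matrix.trace_mul_comm, mul_assoc, hUU, mul_one, trace_pauli_mul, if_neg hne]
    have hc0 (x : Fin N → Fin 4) : c x ≠ 0 := by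
      intro hx
      simpa [hx] using pow_four_of_mem_phases (hc x)
    rw [hh, hh, hab] at htrace
    simp [pauli_mul_self, hc0] at htrace
  rw [_root_.tpow_conj_pauliFourthPower]
  simp only [hh, tpow_smul, pow_four_of_mem_phases (hc _), one_smul]
  exact (Finite.injective_iff_bijective.1 hinj).sum_comp fun b => tpow 4 (pauli b)

/-- If the squares and the fourth powers of a finite family of reals both sum to one, then
every member is `0` or `±1`. -/
lemma sq_eq_zero_or_one_of_sum_sq_of_sum_pow_four {ι : Type*} [Fintype ι] {x : ι → ℝ}
    (h₂ : ∑ i, x i ^ 2 = 1) (h₄ : ∑ i, x i ^ 4 = 1) (i : ι) : x i ^ 2 = 0 ∨ x i ^ 2 = 1 := by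
  have hle (j : ι) : x j ^ 2 ≤ 1 :=
    h₂ ▸ Finset.single_le_sum (f := fun j => x j ^ 2) (fun _ _ => sq_nonneg _) (Finset.mem_univ j)
  have hsum : ∑ j, x j ^ 2 * (1 - x j ^ 2) = 0 := by
    rw [← sub_eq_zero.2 (h₂.trans h₄.symm), ← Finset.sum_sub_distrib]
    exact Finset.sum_congr rfl fun j _ => by ring
  have hzero := (Finset.sum_eq_zero_iff_of_nonneg fun j _ =>
    mul_nonneg (sq_nonneg (x j)) (sub_nonneg.2 (hle j))).1 hsum i (Finset.mem_univ i)
  rcases mul_eq_zero.1 hzero with h | h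
  · exact Or.inl h
  · exact Or.inr (by linarith)

lemma ofReal_re_trace_mul_of_isHermitian {n : Type*} [Fintype n] {A B : Matrix n n ℂ}
    (hA : A.IsHermitian) (hB : B.IsHermitian) : (((A * B).trace.re : ℝ) : ℂ) = (A * B).trace := by
  rw [← Complex.conj_eq_iff_re, ← Complex.star_def, ← Matrix.trace_conjTranspose,
    Matrix.conjTranspose_mul, hA.eq, hB.eq, Matrix.trace_mul_comm]

lemma isHermitian_conj_pauli (V : Op N) (a : Fin N → Fin 4) :
    (V * pauli a * Vᴴ).IsHermitian :=
  Matrix.isHermitian_mul_mul_conjTranspose V (conjTranspose_pauli a)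

/-- A unitary that fixes `∑_P P^⊗4` maps Pauli operators to Pauli operators up to sign, so a
diagonal matrix element of its conjugation action in the Pauli basis is `0` or `±1`. -/
lemma sq_re_trace_of_tpow_conj_pauliFourthPower {V : Op N}
    (hV : V ∈ Matrix.unitaryGroup (QubitIdx N) ℂ)
    (hfix : tpow 4 V * pauliFourthPower N * (tpow 4 V)ᴴ = pauliFourthPower N)
    (b : Fin N → Fin 4) :
    ((pauli b * (V * pauli b * Vᴴ)).trace.re / 2 ^ N) ^ 2 = 0 ∨
      ((pauli b * (V * pauli b * Vᴴ)).trace.re / 2 ^ N) ^ 2 = 1 := by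
  have hVV : V * Vᴴ = 1 := Matrix.mem_unitaryGroup_iff.1 hV
  have hVV' : Vᴴ * V = 1 := Matrix.mem_unitaryGroup_iff'.1 hV
  have hreal (a : Fin N → Fin 4) :=
    ofReal_re_trace_mul_of_isHermitian (conjTranspose_pauli b) (isHermitian_conj_pauli V a)
  refine sq_eq_zero_or_one_of_sum_sq_of_sum_pow_four
    (x := fun a => (pauli b * (V * pauli a * Vᴴ)).trace.re / 2 ^ N) ?_ ?_ b
  · apply Complex.ofReal_injective
    push_cast
    simp only [hreal, div_pow, ← Finset.sum_div]
    have hcycle (a : Fin N → Fin 4) :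
        (pauli b * (V * pauli a * Vᴴ)).trace = (Vᴴ * pauli b * V * pauli a).trace := by
      rw [Matrix.trace_mul_comm (pauli b), mul_assoc (V * pauli a), mul_assoc V,
        Matrix.trace_mul_comm V, mul_assoc (pauli a), Matrix.trace_mul_comm (pauli a)]
    have hsq : Vᴴ * pauli b * V * (Vᴴ * pauli b * V) = Vᴴ * V := by
      simp only [mul_assoc]
      rw [← mul_assoc V Vᴴ, hVV, one_mul, ← mul_assoc (pauli b), pauli_mul_self, one_mul]
    simp only [hcycle]
    rw [sum_trace_mul_pauli_sq, hsq, hVV']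
    simp
    field_simp
  · apply Complex.ofReal_injective
    push_cast
    simp only [hreal, div_pow, ← Finset.sum_div]
    have hsum : ∑ a, (pauli b * (V * pauli a * Vᴴ)).trace ^ 4 =
        ∑ a, (pauli b * pauli a).trace ^ 4 := by
      simp only [← trace_tpow, tpow_mul 4 (pauli b), ← Matrix.trace_sum, ← Finset.mul_sum]
      rw [← tpow_conj_pauliFourthPower, hfix, pauliFourthPower]
    rw [hsum]
    simp [trace_pauli_mul, ite_pow]

open scoped ComplexOrder in
lemma commute_pauli_of_re_trace_eq {V : Op N}
    (hV : V ∈ Matrix.unitaryGroup (QubitIdx N) ℂ) {b : Fin N → Fin 4}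
    (hb : (pauli b * (V * pauli b * Vᴴ)).trace.re = 2 ^ N) : V * pauli b = pauli b * V := by
  have hVV : Vᴴ * V = 1 := Matrix.mem_unitaryGroup_iff'.1 hV
  have hVV' : V * Vᴴ = 1 := Matrix.mem_unitaryGroup_iff.1 hV
  have htrace : (pauli b * (V * pauli b * Vᴴ)).trace = 2 ^ N := by
    rw [← ofReal_re_trace_mul_of_isHermitian (conjTranspose_pauli b) (isHermitian_conj_pauli V b),
      hb]
    norm_num
  have hsq : V * pauli b * Vᴴ * (V * pauli b * Vᴴ) = V * Vᴴ := by
    simp only [mul_assoc]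
    rw [← mul_assoc Vᴴ V, hVV, one_mul, ← mul_assoc (pauli b), pauli_mul_self, one_mul]
  have hdiff : V * pauli b * Vᴴ - pauli b = 0 := by
    rw [← Matrix.trace_mul_conjTranspose_self_eq_zero_iff, Matrix.conjTranspose_sub,
      (isHermitian_conj_pauli V b).eq, conjTranspose_pauli, sub_mul, mul_sub, mul_sub, hsq,
      pauli_mul_self, Matrix.trace_sub, Matrix.trace_sub, Matrix.trace_sub,
      Matrix.trace_mul_comm _ (pauli b), htrace, hVV']
    simp
  calc V * pauli b = V * pauli b * Vᴴ * V := by rw [mul_assoc _ Vᴴ, hVV, mul_one]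
    _ = pauli b * V := by rw [sub_eq_zero.1 hdiff]

end PauliFourthPower

section Commutant

variable {N : ℕ} {G : Set (Op N)}

open NormedSpace in
/-- The exponentials of a skew-Hermitian element of the commutant are symmetric unitaries. -/
lemma exp_mem_unitarySym {A : Op N} (hskew : Aᴴ = -A) (hcomm : ∀ g ∈ G, A * g = g * A) :
    exp A ∈ UnitarySym N G := by
  refine ⟨Matrix.mem_unitaryGroup_iff.2 ?_, fun g hg => Commute.exp_left (hcomm g hg)⟩
  rw [Matrix.star_eq_conjTranspose, ← Matrix.exp_conjTranspose, hskew,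
    ← Matrix.exp_add_of_commute _ _ (Commute.refl A).neg_right, add_neg_cancel, exp_zero]

open NormedSpace in
lemma hasDerivAt_matrix_exp_smul_apply {n : Type*} [Fintype n] [DecidableEq n]
    (A : Matrix n n ℂ) (t : ℝ) (i j : n) :
    HasDerivAt (fun u : ℝ => exp (u • A) i j) ((exp (t • A) * A) i j) t := by
  have h : HasDerivAt (fun u : ℝ => exp (u • A)) (exp (t • A) * A) t :=
    open scoped Matrix.Norms.Operator in hasDerivAt_exp_smul_const (𝕂 := ℝ) A t
  exact hasDerivAt_pi.1 (hasDerivAt_pi.1 h i) j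

open NormedSpace in
/-- If every symmetric unitary fixes `∑_P P^⊗4`, then every skew-Hermitian element of the
commutant commutes with all Pauli operators: along the one-parameter group it generates, the
diagonal matrix elements in the Pauli basis are continuous with values in `{0, 1, -1}`. -/
lemma commute_pauli_of_skewHermitian {A : Op N}
    (hfix : ∀ V ∈ UnitarySym N G,
      tpow 4 V * pauliFourthPower N * (tpow 4 V)ᴴ = pauliFourthPower N)
    (hskew : Aᴴ = -A) (hcomm : ∀ g ∈ G, A * g = g * A) (b : Fin N → Fin 4) :
    A * pauli b = pauli b * A := by
  have hmem (t : ℝ) : exp (t • A) ∈ UnitarySym N G :=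
    exp_mem_unitarySym (by simp [Matrix.conjTranspose_smul, hskew])
      fun g hg => by rw [smul_mul_assoc, hcomm g hg, mul_smul_comm]
  have hcont : Continuous fun t : ℝ => exp (t • A) :=
    continuous_matrix fun i j => continuous_iff_continuousAt.2 fun t =>
      (hasDerivAt_matrix_exp_smul_apply A t i j).continuousAt
  let f : ℝ → ℝ := fun t =>
    (pauli b * (exp (t • A) * pauli b * (exp (t • A))ᴴ)).trace.re / 2 ^ N
  have hf : Continuous f := by
    refine (Complex.continuous_re.comp (Continuous.matrix_trace ?_)).div_const _
    exact continuous_const.matrix_mul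
      ((hcont.matrix_mul continuous_const).matrix_mul hcont.matrix_conjTranspose)
  have hf0 : f 0 = 1 := by
    have htrace : (pauli b * pauli b).trace = ((2 ^ N : ℝ) : ℂ) := by simp [trace_pauli_mul]
    simp only [f, zero_smul, exp_zero, one_mul, Matrix.conjTranspose_one, mul_one, htrace,
      Complex.ofReal_re]
    exact div_self (by positivity)
  have hvalue (t : ℝ) : f t ^ 2 = 0 ∨ f t ^ 2 = 1 :=
    sq_re_trace_of_tpow_conj_pauliFourthPower (hmem t).1 (hfix _ (hmem t)) b
  have hf1 (t : ℝ) : f t = 1 := by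
    by_contra hne
    have hle : f t ≤ 1 / 2 := by
      rcases hvalue t with h | h
      · rw [pow_eq_zero_iff two_ne_zero] at h
        rw [h]
        norm_num
      · rw [(sq_eq_one_iff.1 h).resolve_left hne]
        norm_num
    obtain ⟨s, hs⟩ := mem_range_of_exists_le_of_exists_ge hf ⟨t, hle⟩
      ⟨0, by rw [hf0]; norm_num⟩
    rcases hvalue s with h | h <;> rw [hs] at h <;> norm_num at h
  have hexp (t : ℝ) : exp (t • A) * pauli b = pauli b * exp (t • A) :=
    commute_pauli_of_re_trace_eq (hmem t).1 ((div_eq_one_iff_eq (by positivity)).1 (hf1 t))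
  have hentry (i j : QubitIdx N) : HasDerivAt (fun t : ℝ => exp (t • A) i j) (A i j) 0 := by
    simpa using hasDerivAt_matrix_exp_smul_apply A 0 i j
  ext i j
  have hleft : HasDerivAt (fun t : ℝ => (exp (t • A) * pauli b) i j) ((A * pauli b) i j) 0 := by
    simp only [Matrix.mul_apply]
    exact HasDerivAt.fun_sum fun k _ => (hentry i k).mul_const _
  have hright : HasDerivAt (fun t : ℝ => (pauli b * exp (t • A)) i j) ((pauli b * A) i j) 0 := by
    simp only [Matrix.mul_apply]
    exact HasDerivAt.fun_sum fun k _ => (hentry k j).const_mul _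
  simp only [hexp] at hleft
  exact hleft.unique hright

lemma conjTranspose_commute_of_isUnitarySubgroup (hG : IsUnitarySubgroup G) {V : Op N}
    (hV : ∀ g ∈ G, V * g = g * V) : ∀ g ∈ G, Vᴴ * g = g * Vᴴ := by
  intro g hg
  simpa using (congrArg Matrix.conjTranspose (hV gᴴ (hG.2.2.2 g hg))).symm

lemma commute_pauli_of_mem_unitarySym (hG : IsUnitarySubgroup G)
    (hfix : ∀ V ∈ UnitarySym N G,
      tpow 4 V * pauliFourthPower N * (tpow 4 V)ᴴ = pauliFourthPower N)
    {V : Op N} (hV : V ∈ UnitarySym N G) (b : Fin N → Fin 4) :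
    V * pauli b = pauli b * V := by
  have hadj := conjTranspose_commute_of_isUnitarySubgroup hG hV.2
  have hsub := commute_pauli_of_skewHermitian hfix (A := V - Vᴴ) (by simp)
    (fun g hg => by rw [sub_mul, mul_sub, hV.2 g hg, hadj g hg]) b
  have hadd := commute_pauli_of_skewHermitian hfix (A := Complex.I • (V + Vᴴ))
    (by simp [Matrix.conjTranspose_smul, add_comm])
    (fun g hg => by rw [smul_mul_assoc, mul_smul_comm, add_mul, mul_add, hV.2 g hg, hadj g hg]) b
  rw [smul_mul_assoc, mul_smul_comm] at hadd
  have hadd' := smul_right_injective _ Complex.I_ne_zero hadd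
  have hdecomp : V = (2⁻¹ : ℂ) • ((V - Vᴴ) + (V + Vᴴ)) := by
    rw [sub_add_add_cancel, ← two_smul ℂ, smul_smul]
    norm_num
  rw [hdecomp, smul_mul_assoc, mul_smul_comm, add_mul, mul_add, hsub, hadd']

lemma smul_one_mem_unitaryGroup_iff {c : ℂ} :
    c • (1 : Op N) ∈ Matrix.unitaryGroup (QubitIdx N) ℂ ↔ ‖c‖ = 1 := by
  rw [Matrix.mem_unitaryGroup_iff, Matrix.star_eq_conjTranspose, Matrix.conjTranspose_smul,
    Matrix.conjTranspose_one, smul_mul_smul_comm, mul_one]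
  constructor
  · intro h
    have h00 := congrFun (congrFun h 0) 0
    simp only [Matrix.smul_apply, Matrix.one_apply_eq, smul_eq_mul, mul_one, Complex.star_def,
      Complex.mul_conj, Complex.normSq_eq_norm_sq] at h00
    norm_cast at h00
    exact (pow_eq_one_iff_of_nonneg (norm_nonneg c) two_ne_zero).1 h00
  · intro h
    simp [Complex.mul_conj, Complex.normSq_eq_norm_sq, h]

/-- The symmetric unitaries are scalars as soon as they all fix `∑_P P^⊗4`. -/
lemma unitarySym_eq_of_fix_pauliFourthPower (hG : IsUnitarySubgroup G)
    (hfix : ∀ V ∈ UnitarySym N G,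
      tpow 4 V * pauliFourthPower N * (tpow 4 V)ᴴ = pauliFourthPower N) :
    UnitarySym N G =
      {U : Op N | ∃ θ : ℝ, U = Complex.exp ((θ : ℂ) * Complex.I) • (1 : Op N)} := by
  ext V
  constructor
  · intro hV
    obtain ⟨c, rfl⟩ := exists_eq_smul_one_of_commute_pauli V
      (commute_pauli_of_mem_unitarySym hG hfix hV)
    obtain ⟨θ, hθ⟩ := (Complex.norm_eq_one_iff c).1 (smul_one_mem_unitaryGroup_iff.1 hV.1)
    exact ⟨θ, by rw [hθ]⟩
  · rintro ⟨θ, rfl⟩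
    exact ⟨smul_one_mem_unitaryGroup_iff.2 (Complex.norm_exp_ofReal_mul_I θ), by simp⟩

end Commutant

section Twirl

variable {N : ℕ}

instance : BorelSpace (Op N) := ⟨rfl⟩

lemma continuous_tpow_conj_apply (t : ℕ) (L : BigOp N t) (i j : Fin t → QubitIdx N) :
    Continuous fun U : Op N => (tpow t U * L * (tpow t U)ᴴ) i j := by
  have htpow : Continuous fun U : Op N => tpow t U :=
    continuous_matrix fun i j => continuous_finsetProd Finset.univ fun s _ =>
      (continuous_id (X := Op N)).matrix_elem (i s) (j s)
  exact ((htpow.matrix_mul continuous_const).matrix_mul htpow.matrix_conjTranspose).matrix_elem i j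

lemma integrable_tpow_conj_apply {μ : Measure (Op N)} [IsFiniteMeasure μ]
    (hμ : ∀ᵐ U ∂μ, U ∈ Matrix.unitaryGroup (QubitIdx N) ℂ)
    (t : ℕ) (L : BigOp N t) (i j : Fin t → QubitIdx N) :
    Integrable (fun U : Op N => (tpow t U * L * (tpow t U)ᴴ) i j) μ := by
  have hcont := continuous_tpow_conj_apply t L i j
  have hcompact : IsCompact {U : Op N | ∀ i j, U i j ∈ Metric.closedBall (0 : ℂ) 1} := by
    have h : IsCompact (Set.univ.pi fun _ : QubitIdx N => Set.univ.pi fun _ : QubitIdx N =>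
        Metric.closedBall (0 : ℂ) 1) :=
      isCompact_univ_pi fun _ => isCompact_univ_pi fun _ => isCompact_closedBall 0 1
    simp only [Set.pi, Set.mem_univ, true_imp_iff] at h
    exact h
  obtain ⟨C, hC⟩ := hcompact.exists_bound_of_continuousOn hcont.continuousOn
  refine Integrable.of_bound hcont.measurable.aestronglyMeasurable C ?_
  filter_upwards [hμ] with U hU
  exact hC U fun i j => by simpa using entry_norm_bound_of_unitary hU i j

lemma twirl_eq_of_ae_fix {μ : Measure (Op N)} [IsProbabilityMeasure μ] {t : ℕ} {L : BigOp N t}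
    (h : ∀ᵐ U ∂μ, tpow t U * L * (tpow t U)ᴴ = L) : twirl t μ L = L := by
  ext i j
  have hentry : (fun U => (tpow t U * L * (tpow t U)ᴴ) i j) =ᵐ[μ] fun _ => L i j := by
    filter_upwards [h] with U hU
    rw [hU]
  simp [twirl, integral_congr_ae hentry]

/-- The twirl over a left-invariant measure is invariant under conjugation. -/
lemma tpow_conj_twirl {μ : Measure (Op N)} [IsFiniteMeasure μ]
    (hμ : ∀ᵐ U ∂μ, U ∈ Matrix.unitaryGroup (QubitIdx N) ℂ) {V : Op N}
    (hV : Measure.map (fun U => V * U) μ = μ) (t : ℕ) (L : BigOp N t) :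
    tpow t V * twirl t μ L * (tpow t V)ᴴ = twirl t μ L := by
  ext i j
  have hmul : Continuous fun U : Op N => V * U := continuous_const.matrix_mul continuous_id
  have hintegrable (k l : Fin t → QubitIdx N) := integrable_tpow_conj_apply hμ t L k l
  have hshift (U : Op N) : (tpow t (V * U) * L * (tpow t (V * U))ᴴ) i j =
      ∑ l, ∑ k, tpow t V i k * (tpow t U * L * (tpow t U)ᴴ) k l * (tpow t V)ᴴ l j := by
    have hassoc : tpow t (V * U) * L * (tpow t (V * U))ᴴ =
        tpow t V * (tpow t U * L * (tpow t U)ᴴ) * (tpow t V)ᴴ := by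
      simp only [tpow_mul, Matrix.conjTranspose_mul, mul_assoc]
    rw [hassoc, Matrix.mul_apply]
    exact Finset.sum_congr rfl fun l _ => by rw [Matrix.mul_apply, Finset.sum_mul]
  calc (tpow t V * twirl t μ L * (tpow t V)ᴴ) i j
      = ∑ l, ∑ k, tpow t V i k * (∫ U, (tpow t U * L * (tpow t U)ᴴ) k l ∂μ) *
          (tpow t V)ᴴ l j := by
        rw [Matrix.mul_apply]
        exact Finset.sum_congr rfl fun l _ => by rw [Matrix.mul_apply, Finset.sum_mul]; rfl
    _ = ∫ U, (tpow t (V * U) * L * (tpow t (V * U))ᴴ) i j ∂μ := by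
        simp only [hshift]
        rw [integral_finsetSum _ fun l _ => integrable_finsetSum _ fun k _ =>
          ((hintegrable k l).const_mul _).mul_const _]
        refine Finset.sum_congr rfl fun l _ => ?_
        rw [integral_finsetSum _ fun k _ => ((hintegrable k l).const_mul _).mul_const _]
        refine Finset.sum_congr rfl fun k _ => ?_
        rw [integral_mul_const, integral_const_mul]
    _ = ∫ U, (tpow t U * L * (tpow t U)ᴴ) i j ∂(Measure.map (fun U => V * U) μ) :=
        (integral_map hmul.measurable.aemeasurable
          (continuous_tpow_conj_apply t L i j).measurable.aestronglyMeasurable).symm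
    _ = twirl t μ L i j := by rw [hV]; rfl

lemma tpow_conj_eq_of_norm_eq_one {c : ℂ} (hc : ‖c‖ = 1) (t : ℕ) (L : BigOp N t) :
    tpow t (c • (1 : Op N)) * L * (tpow t (c • (1 : Op N)))ᴴ = L := by
  have hphase : c ^ t * star (c ^ t) = 1 := by
    rw [Complex.star_def, Complex.mul_conj, Complex.normSq_eq_norm_sq, norm_pow, hc]
    simp
  rw [tpow_smul, tpow_one, Matrix.conjTranspose_smul, Matrix.conjTranspose_one, smul_mul_assoc,
    one_mul, smul_mul_smul_comm, mul_one, hphase, one_smul]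

end Twirl

/-- `C_{N,G}` is a `G`-symmetric unitary 4-design if and only if the only
`G`-symmetric unitaries are the scalar unitaries `e^{iθ} I`. -/
theorem stmt9 {N : ℕ} (G : Set (Op N)) (hG : IsUnitarySubgroup G)
    (μC μU : Measure (Op N)) [IsProbabilityMeasure μC] [IsProbabilityMeasure μU]
    (hCsupp : ∀ᵐ U ∂μC, U ∈ CliffordSym N G)
    (hUsupp : ∀ᵐ U ∂μU, U ∈ UnitarySym N G)
    (hCinvL : ∀ V ∈ CliffordSym N G, Measure.map (fun U => V * U) μC = μC)
    (hCinvR : ∀ V ∈ CliffordSym N G, Measure.map (fun U => U * V) μC = μC)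
    (hUinvL : ∀ V ∈ UnitarySym N G, Measure.map (fun U => V * U) μU = μU)
    (hUinvR : ∀ V ∈ UnitarySym N G, Measure.map (fun U => U * V) μU = μU) :
    (∀ L : BigOp N 4, twirl 4 μC L = twirl 4 μU L) ↔
      UnitarySym N G =
        {U : Op N | ∃ θ : ℝ, U = Complex.exp ((θ : ℂ) * Complex.I) • (1 : Op N)} := by
  constructor
  · intro hdesign
    refine unitarySym_eq_of_fix_pauliFourthPower hG fun V hV => ?_
    have htwirl : twirl 4 μU (pauliFourthPower N) = pauliFourthPower N := by
      rw [← hdesign]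
      exact twirl_eq_of_ae_fix (hCsupp.mono fun U hU => hU.1.tpow_conj_pauliFourthPower)
    simpa only [htwirl] using
      tpow_conj_twirl (hUsupp.mono fun U hU => hU.1) (hUinvL V hV) 4 (pauliFourthPower N)
  · intro hscalar L
    have hfix (U : Op N) (hU : U ∈ UnitarySym N G) : tpow 4 U * L * (tpow 4 U)ᴴ = L := by
      rw [hscalar] at hU
      obtain ⟨θ, rfl⟩ := hU
      exact tpow_conj_eq_of_norm_eq_one (Complex.norm_exp_ofReal_mul_I θ) 4 L
    rw [twirl_eq_of_ae_fix (hCsupp.mono fun U hU => hfix U hU.2),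
      twirl_eq_of_ae_fix (hUsupp.mono hfix)]
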